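/- arXiv:2205.00059 — 2 statements merged into one kernel-verified Lean document; each statement's English description precedes it below -/
import Mathlib

section
/- Let λ > 0 and β ∈ (0,1]. For every ε > 0 there exist q ∈ ℕ₀ and K' > 0 such that for every sequence (φ_n)_{n∈ℕ₀} ⊂ ℂ with ‖φ‖_q² := ∑_{n=0}^∞ (n!)² 2^{nq} |φ_n|² < ∞, the series φ(z) := ∑_{n=0}^∞ φ_n C_n^{λ,β}(z) converges for every z ∈ ℂ, defines an entire function of z, and satisfies |φ(z)| ≤ K' ‖φ‖_q e^{ε|z|} for all z ∈ ℂ. In particular, every such φ is an entire function of minimal type and order of growth one. -/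
/-!
The Cauchy estimate on a small circle controls every `C_n` at once. Near `0` the function
`z ↦ e^{x log(1+z)} / E_β(λz)` is holomorphic because `E_β(0) = 1`, and on a small disc of radius
`δ` (depending on `ε`, `λ`, `β` but not on `x`) one has `|log(1+z)| ≤ ε` and `|E_β(λz)| ≥ 1/2`.
Hence `|C_n(x)| ≤ n! · 2 e^{ε|x|} / δⁿ` (`norm_genAppell_le`). Choosing `q` with
`2^q δ² ≥ 2`, Cauchy–Schwarz bounds `∑ |φ_n| n! δ^{-n}` by a constant times `‖φ‖_q`
(`summable_and_tsum_weighted_le`), so the series converges absolutely and locally uniformly in `x`.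
Its terms are entire (`differentiable_genAppell`) since the generating function is jointly analytic
in `(x, z)`, a property preserved by differentiation in `z`; so the sum is entire and obeys
the required growth bound.
-/

open MeasureTheory Finset
open scoped ENNReal NNReal

noncomputable section

/-- The complex Mittag-Leffler function `E_β(z) = ∑ zⁿ / Γ(βn+1)`. -/
def mittagLeffler (β : ℝ) (z : ℂ) : ℂ :=
  ∑' n : ℕ, z ^ n / (Complex.Gamma ((β * n + 1 : ℝ) : ℂ))

/-- The real Mittag-Leffler function `E_β(x) = ∑ xⁿ / Γ(βn+1)`. -/
def mittagLefflerR (β : ℝ) (x : ℝ) : ℝ :=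
  ∑' n : ℕ, x ^ n / Real.Gamma (β * n + 1)

/-- The fractional Poisson measure `π_{λ,β} = ∑_k (λᵏ/k!) E_β⁽ᵏ⁾(-λ) δ_k` on `ℝ`. -/
def fracPoisson (lam β : ℝ) : Measure ℝ :=
  Measure.sum fun k : ℕ =>
    ENNReal.ofReal (lam ^ k / k.factorial * iteratedDeriv k (mittagLefflerR β) (-lam)) •
      Measure.dirac (k : ℝ)

/-- The Poisson measure with rate `μ` on `ℝ`, `π_μ({k}) = (μᵏ/k!) e^{-μ}`. -/
def poissonMeasureR (μ : ℝ) : Measure ℝ :=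
  Measure.sum fun k : ℕ =>
    ENNReal.ofReal (μ ^ k / k.factorial * Real.exp (-μ)) • Measure.dirac (k : ℝ)

/-- The generalized Appell polynomials
`C_n^{λ,β}(x) = dⁿ/dzⁿ [e^{x log(1+z)} / E_β(λz)]` at `z = 0`. -/
def genAppell (lam β : ℝ) (n : ℕ) (x : ℂ) : ℂ :=
  iteratedDeriv n
    (fun z : ℂ => Complex.exp (x * Complex.log (1 + z)) / mittagLeffler β (lam * z)) 0

/-- The Appell polynomials `A_n^{λ,β}(x) = dⁿ/dzⁿ [e^{zx} / E_β(λ(eᶻ-1))]` at `z = 0`. -/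
def appell (lam β : ℝ) (n : ℕ) (x : ℂ) : ℂ :=
  iteratedDeriv n
    (fun z : ℂ => Complex.exp (z * x) / mittagLeffler β (lam * (Complex.exp z - 1))) 0

/-- Stirling numbers of the first kind, via `(log(1+z))^k = k! ∑_{n≥k} s(n,k) zⁿ/n!`. -/
def stirlingFst (n k : ℕ) : ℝ :=
  iteratedDeriv n (fun x : ℝ => (Real.log (1 + x)) ^ k) 0 / k.factorial

/-- Stirling numbers of the second kind, via `(eᶻ-1)^k = k! ∑_{n≥k} S(n,k) zⁿ/n!`. -/
def stirlingSnd (n k : ℕ) : ℝ :=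
  iteratedDeriv n (fun x : ℝ => (Real.exp x - 1) ^ k) 0 / k.factorial

/-- The `n`-th moment of the fractional Poisson measure. -/
def fpMoment (lam β : ℝ) (n : ℕ) : ℝ := ∫ x, x ^ n ∂(fracPoisson lam β)

/-- `M̃_{λ,β}(m) = m! λᵐ / Γ(mβ+1)`. -/
def tildeM (lam β : ℝ) (m : ℕ) : ℝ := m.factorial * lam ^ m / Real.Gamma (m * β + 1)

/-- The (partial exponential) Bell polynomials `B_{n,k}(x₁, …, x_{n-k+1})`. -/
def bellPoly (n k : ℕ) (x : ℕ → ℂ) : ℂ :=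
  ∑ j ∈ (Fintype.piFinset fun _ : Fin (n - k + 1) => Finset.range (n + 1)).filter
      (fun j => (∑ i, j i) = k ∧ (∑ i, (i.1 + 1) * j i) = n),
    (n.factorial : ℂ) / (∏ i, ((j i).factorial : ℂ)) *
      ∏ i, (x (i.1 + 1) / ((i.1 + 1).factorial : ℂ)) ^ j i

/-- `E_β` is analytic at `0`: its coefficients `1 / Γ(βn+1)` are bounded, as `Γ` is bounded below
by a positive constant on `(0, ∞)`. -/
theorem analyticAt_mittagLeffler (β : ℝ) (hβ0 : 0 < β) : AnalyticAt ℂ (mittagLeffler β) 0 := by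
  obtain ⟨x₀, hx₀, hmin⟩ := Real.exists_isMinOn_Gamma_Ioi
  have hc : 0 < Real.Gamma x₀ := Real.Gamma_pos_of_pos (by linarith [hx₀.1])
  have hsum : Summable fun n : ℕ => (1 / 2 : ℝ) ^ n / Real.Gamma x₀ :=
    summable_geometric_two.div_const _
  have hd : DifferentiableOn ℂ (mittagLeffler β) (Metric.ball 0 (1 / 2)) := by
    refine Complex.differentiableOn_tsum_of_summable_norm hsum (fun n => ?_) Metric.isOpen_ball ?_
    · exact (differentiable_id.pow n).div_const _ |>.differentiableOn
    · intro n w hw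
      have hw' : ‖w‖ ≤ 1 / 2 := by simpa using (mem_ball_zero_iff.1 hw).le
      have hp : 0 < β * n + 1 := by positivity
      have hg : Real.Gamma x₀ ≤ Real.Gamma (β * n + 1) := hmin hp
      rw [norm_div, norm_pow, Complex.Gamma_ofReal, Complex.norm_real,
        Real.norm_of_nonneg (hc.le.trans hg)]
      gcongr
  exact hd.analyticAt (Metric.ball_mem_nhds _ (by norm_num))

theorem mittagLeffler_zero (β : ℝ) : mittagLeffler β 0 = 1 := by
  unfold mittagLeffler
  rw [tsum_eq_single 0 (fun n hn => by simp [hn])]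
  simp

/-- Joint analyticity survives iterated differentiation in the second variable. -/
theorem analyticAt_iteratedDeriv_snd (f : ℂ → ℂ → ℂ) (p : ℂ × ℂ)
    (hf : AnalyticAt ℂ (fun p : ℂ × ℂ => f p.1 p.2) p) (n : ℕ) :
    AnalyticAt ℂ (fun p : ℂ × ℂ => iteratedDeriv n (f p.1) p.2) p := by
  induction n with
  | zero => simpa using hf
  | succ n ih =>
    have h1 : AnalyticAt ℂ (fun p : ℂ × ℂ =>
        fderiv ℂ (fun p : ℂ × ℂ => iteratedDeriv n (f p.1) p.2) p ((0 : ℂ), (1 : ℂ))) p :=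
      (ContinuousLinearMap.apply ℂ ℂ ((0 : ℂ), (1 : ℂ))).analyticAt _ |>.comp ih.fderiv
    refine h1.congr ?_
    filter_upwards [ih.eventually_analyticAt] with y hy
    have hc : HasDerivAt (fun z : ℂ => (y.1, z)) ((0 : ℂ), (1 : ℂ)) y.2 :=
      (hasDerivAt_const _ _).prodMk (hasDerivAt_id _)
    have h2 := HasFDerivAt.comp_hasDerivAt (f := fun z : ℂ => (y.1, z)) y.2
      (l := fun p : ℂ × ℂ => iteratedDeriv n (f p.1) p.2)
      hy.differentiableAt.hasFDerivAt hc
    rw [iteratedDeriv_succ]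
    exact h2.deriv.symm

theorem differentiable_genAppell (lam β : ℝ) (hβ0 : 0 < β) (n : ℕ) :
    Differentiable ℂ (genAppell lam β n) := by
  intro x
  have hE : AnalyticAt ℂ (fun p : ℂ × ℂ => mittagLeffler β (lam * p.2)) (x, 0) := by
    have h0 : AnalyticAt ℂ (mittagLeffler β) ((lam : ℂ) * ((x, 0) : ℂ × ℂ).2) := by
      simpa using analyticAt_mittagLeffler β hβ0
    exact h0.fun_comp_of_eq (analyticAt_const.mul analyticAt_snd) rfl
  have hL : AnalyticAt ℂ (fun p : ℂ × ℂ => Complex.log (1 + p.2)) (x, 0) :=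
    (analyticAt_const.add analyticAt_snd).clog (by simp)
  have hf : AnalyticAt ℂ (fun p : ℂ × ℂ =>
      Complex.exp (p.1 * Complex.log (1 + p.2)) / mittagLeffler β (lam * p.2)) (x, 0) :=
    ((analyticAt_fst.mul hL).cexp).div hE (by simp [mittagLeffler_zero])
  have h := analyticAt_iteratedDeriv_snd
    (fun x z => Complex.exp (x * Complex.log (1 + z)) / mittagLeffler β (lam * z)) (x, 0) hf n
  have h2 : DifferentiableAt ℂ (fun y : ℂ => (y, (0 : ℂ))) x := by fun_prop
  exact DifferentiableAt.comp (f := fun y : ℂ => (y, (0 : ℂ))) x h.differentiableAt h2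

/-- The Cauchy estimate for `C_n`, on a circle whose radius does not depend on `n` or `x`. -/
theorem norm_genAppell_le (lam β : ℝ) (hβ0 : 0 < β) (ε : ℝ) (hε : 0 < ε) :
    ∃ δ : ℝ, 0 < δ ∧ ∀ (n : ℕ) (x : ℂ),
      ‖genAppell lam β n x‖ ≤ n.factorial * (2 * Real.exp (ε * ‖x‖)) / δ ^ n := by
  have hE : AnalyticAt ℂ (fun z : ℂ => mittagLeffler β (lam * z)) 0 := by
    have h0 : AnalyticAt ℂ (mittagLeffler β) ((lam : ℂ) * 0) := by
      simpa using analyticAt_mittagLeffler β hβ0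
    exact h0.fun_comp_of_eq (analyticAt_const.mul analyticAt_id) rfl
  have hL : AnalyticAt ℂ (fun z : ℂ => Complex.log (1 + z)) 0 :=
    (analyticAt_const.add analyticAt_id).clog (by simp)
  have e1 : ∀ᶠ z : ℂ in nhds 0, 1 / 2 < ‖mittagLeffler β (lam * z)‖ :=
    hE.continuousAt.norm.eventually_const_lt (by norm_num [mittagLeffler_zero])
  have e2 : ∀ᶠ z : ℂ in nhds 0, ‖Complex.log (1 + z)‖ < ε :=
    hL.continuousAt.norm.eventually_lt_const (by simpa using hε)
  obtain ⟨r, hr, hball⟩ := Metric.eventually_nhds_iff_ball.1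
    (e1.and (e2.and (hE.eventually_analyticAt.and hL.eventually_analyticAt)))
  refine ⟨r / 2, by positivity, fun n x => ?_⟩
  have hsub : Metric.closedBall (0 : ℂ) (r / 2) ⊆ Metric.ball 0 r :=
    Metric.closedBall_subset_ball (by linarith)
  refine Complex.norm_iteratedDeriv_le_of_forall_mem_sphere_norm_le n (by positivity) ?_ ?_
  · refine DifferentiableOn.diffContOnCl ?_
    intro z hz
    rw [closure_ball _ (by positivity)] at hz
    obtain ⟨h1, -, h3, h4⟩ := hball z (hsub hz)
    refine DifferentiableAt.differentiableWithinAt ?_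
    refine DifferentiableAt.div ?_ h3.differentiableAt (norm_pos_iff.1 (by linarith))
    exact (h4.differentiableAt.const_mul x).cexp
  · intro z hz
    obtain ⟨h1, h2, -⟩ := hball z (hsub (Metric.sphere_subset_closedBall hz))
    rw [norm_div, div_le_iff₀ (by linarith)]
    have hexp : ‖Complex.exp (x * Complex.log (1 + z))‖ ≤ Real.exp (ε * ‖x‖) := by
      refine (Complex.norm_exp_le_exp_norm _).trans (Real.exp_le_exp.2 ?_)
      rw [norm_mul, mul_comm]
      gcongr
    nlinarith [Real.exp_pos (ε * ‖x‖)]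

/-- Cauchy–Schwarz for `∑ |φ_n| n! δ^{-n}` against the weights `(n!)² 2^{nq}`; the dual weights
`(2^q δ²)^{-n}` are dominated by `2^{-n}`, whence the factor `√2`. -/
theorem summable_and_tsum_weighted_le (δ : ℝ) (hδ : 0 < δ) (q : ℕ) (hq : 2 ≤ 2 ^ q * δ ^ 2)
    (φ : ℕ → ℂ)
    (hφ : Summable (fun n : ℕ => (n.factorial : ℝ) ^ 2 * 2 ^ (n * q) * ‖φ n‖ ^ 2)) :
    Summable (fun n : ℕ => ‖φ n‖ * (n.factorial / δ ^ n)) ∧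
      ∑' n : ℕ, ‖φ n‖ * (n.factorial / δ ^ n) ≤
        Real.sqrt 2 *
          Real.sqrt (∑' n : ℕ, (n.factorial : ℝ) ^ 2 * 2 ^ (n * q) * ‖φ n‖ ^ 2) := by
  set s : ℝ := Real.sqrt (2 ^ q) with hs
  have hs2 : s ^ 2 = 2 ^ q := Real.sq_sqrt (by positivity)
  have hs0 : 0 < s := Real.sqrt_pos.2 (by positivity)
  have hsd : (s * δ) ^ 2 = 2 ^ q * δ ^ 2 := by rw [mul_pow, hs2]
  have hf2 : ∀ n : ℕ, (n.factorial * s ^ n * ‖φ n‖) ^ (2 : ℝ) =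
      (n.factorial : ℝ) ^ 2 * 2 ^ (n * q) * ‖φ n‖ ^ 2 := by
    intro n
    rw [Real.rpow_two, mul_pow, mul_pow, ← pow_mul, mul_comm n 2, pow_mul, hs2, ← pow_mul,
      mul_comm q n]
  have hg2 : ∀ n : ℕ, (((s * δ)⁻¹) ^ n) ^ (2 : ℝ) ≤ (1 / 2 : ℝ) ^ n := by
    intro n
    rw [Real.rpow_two, ← pow_mul, mul_comm n 2, pow_mul, inv_pow, hsd]
    gcongr
    rw [one_div]
    gcongr
  have hgs : Summable fun n : ℕ => (((s * δ)⁻¹) ^ n) ^ (2 : ℝ) :=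
    Summable.of_nonneg_of_le (fun n => by positivity) hg2 summable_geometric_two
  have hfg : ∀ n : ℕ, n.factorial * s ^ n * ‖φ n‖ * ((s * δ)⁻¹) ^ n =
      ‖φ n‖ * (n.factorial / δ ^ n) := by
    intro n
    rw [inv_pow, mul_pow]
    field_simp
  have key := Real.summable_and_inner_le_Lp_mul_Lq_tsum_of_nonneg Real.HolderConjugate.two_two
    (f := fun n : ℕ => n.factorial * s ^ n * ‖φ n‖) (g := fun n : ℕ => ((s * δ)⁻¹) ^ n)
    (fun n => by positivity) (fun n => by positivity) (by simpa only [hf2] using hφ) hgs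
  simp only [hf2, hfg] at key
  refine ⟨key.1, key.2.trans ?_⟩
  rw [← Real.sqrt_eq_rpow, ← Real.sqrt_eq_rpow, mul_comm]
  gcongr
  exact (hgs.tsum_le_tsum hg2 summable_geometric_two).trans tsum_geometric_two.le

theorem stmt12 (lam β : ℝ) (hlam : 0 < lam) (hβ0 : 0 < β) (hβ1 : β ≤ 1)
    (ε : ℝ) (hε : 0 < ε) :
    ∃ (q : ℕ) (K' : ℝ), 0 < K' ∧ ∀ φ : ℕ → ℂ,
      Summable (fun n : ℕ => (n.factorial : ℝ) ^ 2 * 2 ^ (n * q) * ‖φ n‖ ^ 2) →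
      (∀ z : ℂ, Summable fun n : ℕ => φ n * genAppell lam β n z) ∧
      Differentiable ℂ (fun z : ℂ => ∑' n : ℕ, φ n * genAppell lam β n z) ∧
      ∀ z : ℂ, ‖∑' n : ℕ, φ n * genAppell lam β n z‖ ≤
        K' * Real.sqrt (∑' n : ℕ, (n.factorial : ℝ) ^ 2 * 2 ^ (n * q) * ‖φ n‖ ^ 2) *
          Real.exp (ε * ‖z‖) := by
  obtain ⟨δ, hδ, hC⟩ := norm_genAppell_le lam β hβ0 ε hε
  obtain ⟨q, hq⟩ := pow_unbounded_of_one_lt (2 / δ ^ 2) (one_lt_two : (1 : ℝ) < 2)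
  have hq' : 2 ≤ 2 ^ q * δ ^ 2 := by
    rw [div_lt_iff₀ (by positivity)] at hq
    exact hq.le
  refine ⟨q, 2 * Real.sqrt 2, by positivity, fun φ hφ => ?_⟩
  obtain ⟨hS, hle⟩ := summable_and_tsum_weighted_le δ hδ q hq' φ hφ
  have hterm : ∀ (n : ℕ) (z : ℂ), ‖φ n * genAppell lam β n z‖ ≤
      ‖φ n‖ * (n.factorial / δ ^ n) * (2 * Real.exp (ε * ‖z‖)) := by
    intro n z
    rw [norm_mul]
    calc ‖φ n‖ * ‖genAppell lam β n z‖
        ≤ ‖φ n‖ * (n.factorial * (2 * Real.exp (ε * ‖z‖)) / δ ^ n) := by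
          gcongr
          exact hC n z
      _ = _ := by ring
  refine ⟨fun z => Summable.of_norm_bounded (hS.mul_right _) (fun n => hterm n z), ?_, ?_⟩
  · intro z
    have hd := Complex.differentiableOn_tsum_of_summable_norm
      (F := fun (n : ℕ) (z : ℂ) => φ n * genAppell lam β n z)
      (U := Metric.ball 0 (‖z‖ + 1))
      (hS.mul_right (2 * Real.exp (ε * (‖z‖ + 1))))
      (fun n => ((differentiable_genAppell lam β hβ0 n).const_mul (φ n)).differentiableOn)
      Metric.isOpen_ball (fun n w hw => (hterm n w).trans (by
        have := (mem_ball_zero_iff.1 hw).le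
        gcongr))
    exact hd.differentiableAt (Metric.isOpen_ball.mem_nhds (by simp))
  · intro z
    calc ‖∑' n : ℕ, φ n * genAppell lam β n z‖
        ≤ (∑' n : ℕ, ‖φ n‖ * (n.factorial / δ ^ n)) * (2 * Real.exp (ε * ‖z‖)) :=
          tsum_of_norm_bounded (hS.hasSum.mul_right _) (fun n => hterm n z)
      _ ≤ (Real.sqrt 2 *
          Real.sqrt (∑' n : ℕ, (n.factorial : ℝ) ^ 2 * 2 ^ (n * q) * ‖φ n‖ ^ 2)) *
          (2 * Real.exp (ε * ‖z‖)) := by gcongr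
      _ = _ := by ring
end
end

section
/- Let λ > 0 and β ∈ (0,1]. For every n ∈ ℕ₀, the Appell polynomial at zero satisfies A_n^{λ,β}(0) = ∑_{k=0}^n (−1)^k k! B_{n,k}(M_{λ,β}(1), M_{λ,β}(2), …, M_{λ,β}(n−k+1)), where B_{n,k} are the Bell polynomials and M_{λ,β}(j) is the j-th moment of the fractional Poisson measure. -/
/-!
By Taylor expansion of `E_β` at `-λ`, the moment generating function of the fractional Poisson
measure is `E_β(λ (e^z - 1)) = ∑ M(n) zⁿ / n!` (`hasSum_mgf`), so `A_n(0) / n!` is the `n`-th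
Taylor coefficient of the reciprocal of this series. As `M(0) = 1`, the reciprocal is the geometric
series `∑ (-1)ᵏ gᵏ` with `g = ∑_{i ≥ 1} M(i) zⁱ / i!`, and the coefficient of `zⁿ` in `gᵏ` is
`k! B_{n,k} / n!` by the multinomial theorem (`coeff_pow_eq_bellPoly`, `coeff_inv_eq_bell`).

The analytic difficulty is that the weights `(λᵐ / m!) E_β⁽ᵐ⁾(-λ)` are nonnegative
(`fpw_nonneg`), i.e. that `x ↦ E_β(-x)` is completely monotone for `0 < β ≤ 1`. This is proved by
discretization. Let `c = λ / n^β`. By Euler's formula for `Γ`, the coefficient of `zⁿ` in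
`∑_k (-c)ᵏ (1 - z)^(-βk-1) = (1 - z)^(β-1) / ((1 - z)^β + c)` tends to
`∑_k (-λ)ᵏ / Γ(βk + 1) = E_β(-λ)`. The power series on the right has nonnegative coefficients:
those of `(1 - z)^(β-1)` are nonnegative, and those of `(1 - z)^β + c` are nonpositive except for
the constant term `1 + c`. The `m`-th derivative in `c` is treated in the same way.
-/

open MeasureTheory Finset
open scoped ENNReal NNReal

noncomputable section

/-! ### The coefficients of `(1 - z)^(-a)` -/

/-- The coefficient `a (a + 1) ⋯ (a + n - 1) / n!` of `zⁿ` in `(1 - z)^(-a)`. -/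
def rf (a : ℝ) : ℕ → ℝ
  | 0 => 1
  | n + 1 => rf a n * (a + n) / (n + 1)

lemma rf_nonneg {a : ℝ} (ha : 0 ≤ a) (n : ℕ) : 0 ≤ rf a n := by
  induction n with
  | zero => simp [rf]
  | succ n ih => simp only [rf]; positivity

lemma rf_neg {b : ℝ} (hb0 : 0 < b) (hb1 : b ≤ 1) (n : ℕ) : rf (-b) (n + 1) ≤ 0 := by
  induction n with
  | zero => simp [rf]; linarith
  | succ n ih =>
    rw [rf]
    apply div_nonpos_of_nonpos_of_nonneg _ (by positivity)
    apply mul_nonpos_of_nonpos_of_nonneg ih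
    push_cast
    have : (0:ℝ) ≤ n := by positivity
    linarith

lemma succ_mul_rf (a : ℝ) (n : ℕ) : ((n : ℝ) + 1) * rf a (n + 1) = (a + n) * rf a n := by
  rw [rf]; field_simp

/-- The identity `(1 - z)^(-a) (1 - z)^(-b) = (1 - z)^(-(a + b))` on coefficients. -/
lemma rf_add (a b : ℝ) (n : ℕ) :
    ∑ p ∈ antidiagonal n, rf a p.1 * rf b p.2 = rf (a + b) n := by
  induction n with
  | zero => simp [rf]
  | succ n ih =>
    have h1 : ((n : ℝ) + 1) * ∑ p ∈ antidiagonal (n + 1), rf a p.1 * rf b p.2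
        = ∑ p ∈ antidiagonal (n + 1), (p.1 : ℝ) * rf a p.1 * rf b p.2
          + ∑ p ∈ antidiagonal (n + 1), rf a p.1 * ((p.2 : ℝ) * rf b p.2) := by
      rw [mul_sum, ← sum_add_distrib]
      refine sum_congr rfl fun p hp => ?_
      have : ((p.1 : ℝ) + p.2) = n + 1 := by exact_mod_cast mem_antidiagonal.1 hp
      rw [← this]; ring
    have h2 : ((n : ℝ) + 1) * rf (a + b) (n + 1) = (a + b + n) * rf (a + b) n := succ_mul_rf _ _
    rw [← ih, mul_sum] at h2
    have h3 : ((n : ℝ) + 1) ≠ 0 := by positivity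
    apply mul_left_cancel₀ h3
    rw [h1, h2, Finset.Nat.sum_antidiagonal_succ (f := fun p => (p.1 : ℝ) * rf a p.1 * rf b p.2),
      Finset.Nat.sum_antidiagonal_succ' (f := fun p => rf a p.1 * ((p.2 : ℝ) * rf b p.2))]
    simp only [Nat.cast_zero, zero_mul, mul_zero, zero_add, Nat.cast_add, Nat.cast_one, succ_mul_rf]
    rw [← sum_add_distrib]
    refine sum_congr rfl fun p hp => ?_
    have : ((p.1 : ℝ) + p.2) = n := by exact_mod_cast mem_antidiagonal.1 hp
    rw [← this]; ring

/-- For fixed `n`, the coefficient grows at most polynomially in `a`. -/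
lemma rf_le_pow {a b : ℝ} (ha : 0 ≤ a) (hab : a ≤ b) (n : ℕ) : rf (a + 1) n ≤ (b + 1) ^ n := by
  induction n with
  | zero => simp [rf]
  | succ n ih =>
    rw [rf, pow_succ, mul_div_assoc]
    have := rf_nonneg (a := a + 1) (by linarith) n
    apply mul_le_mul ih _ (by positivity) (by have := ha.trans hab; positivity)
    rw [div_le_iff₀ (by positivity)]
    have : (0:ℝ) ≤ n := by positivity
    nlinarith [mul_nonneg (ha.trans hab) this]

lemma rf_one (n : ℕ) : rf 1 n = 1 := by
  induction n with
  | zero => rfl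
  | succ n ih =>
    rw [rf, ih]
    have : (n : ℝ) + 1 ≠ 0 := by positivity
    field_simp
    ring

lemma rf_eq_choose (a : ℝ) (n : ℕ) : rf a n = Ring.choose (a + n - 1) n := by
  have h : ∀ n : ℕ, (n.factorial : ℝ) * rf a n = (ascPochhammer ℝ n).eval a := by
    intro n
    induction n with
    | zero => simp [rf]
    | succ n ih =>
      rw [ascPochhammer_succ_eval, ← ih, rf, Nat.factorial_succ]
      push_cast
      field_simp
  have h2 := Ring.factorial_nsmul_multichoose_eq_ascPochhammer a n
  rw [Polynomial.ascPochhammer_smeval_eq_eval, ← h n, nsmul_eq_mul, Ring.multichoose_eq] at h2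
  exact (mul_left_cancel₀ (by positivity) h2).symm

lemma hasSum_rf (a : ℝ) {r : ℝ} (hr0 : 0 ≤ r) (hr1 : r < 1) :
    HasSum (fun n => rf a n * r ^ n) (1 / (1 - r) ^ a) := by
  have h := (Real.one_div_one_sub_rpow_hasFPowerSeriesOnBall_zero a).hasSum (y := r)
    (by simpa [Real.enorm_of_nonneg hr0] using hr1)
  simpa [rf_eq_choose, FormalMultilinearSeries.ofScalars] using h

/-- Since `rf (a + 1) n = ∑_{i ≤ n} rf a i`, the bound has the exponent `a`, not `a + 1`; this is
what makes the estimate `rf_div_le` uniform in `n`. -/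
lemma rf_mul_pow_le {a : ℝ} (ha : 0 ≤ a) {r : ℝ} (hr0 : 0 ≤ r) (hr1 : r < 1) (n : ℕ) :
    rf (a + 1) n * r ^ n ≤ 1 / (1 - r) ^ a := by
  rw [← rf_add a 1, Finset.Nat.sum_antidiagonal_eq_sum_range_succ_mk, sum_mul]
  simp only [rf_one, mul_one]
  refine le_trans (sum_le_sum fun i hi => ?_) (sum_le_hasSum (range (n + 1))
    (fun i _ => mul_nonneg (rf_nonneg ha i) (pow_nonneg hr0 i)) (hasSum_rf a hr0 hr1))
  exact mul_le_mul_of_nonneg_left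
    (pow_le_pow_of_le_one hr0 hr1.le (Nat.lt_succ_iff.1 (mem_range.1 hi))) (rf_nonneg ha i)

/-- The previous bound with `r = 1 - R / n`. As `R` is arbitrary, the left-hand side decays faster
than any exponential in `a`, uniformly in large `n`. -/
lemma rf_div_le {a R : ℝ} (ha : 0 ≤ a) (hR : 0 < R) {n : ℕ} (hn : 2 * R ≤ n) :
    rf (a + 1) n / (n : ℝ) ^ a ≤ Real.exp (2 * R) / R ^ a := by
  have hn0 : (0 : ℝ) < n := by linarith
  have hRn : R / n ≤ 1 / 2 := by rw [div_le_div_iff₀ hn0 two_pos]; linarith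
  have hRn0 : 0 < R / n := by positivity
  have h := rf_mul_pow_le ha (r := 1 - R / n) (by linarith) (by linarith) n
  rw [sub_sub_cancel, Real.div_rpow hR.le hn0.le] at h
  have h2 : 1 ≤ (1 - R / n) ^ n * Real.exp (2 * R) := by
    have e : Real.exp (2 * R) = Real.exp (2 * (R / n)) ^ n := by
      rw [← Real.exp_nat_mul]; congr 1; field_simp
    rw [e, ← mul_pow]
    apply one_le_pow₀
    nlinarith [Real.add_one_le_exp (2 * (R / n))]
  have hp := rf_nonneg (a := a + 1) (by linarith) n
  rw [div_le_div_iff₀ (by positivity) (by positivity)]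
  have hR' : 0 < R ^ a := by positivity
  rw [one_div_div, le_div_iff₀ hR'] at h
  calc rf (a + 1) n * R ^ a ≤ rf (a + 1) n * R ^ a * ((1 - R / n) ^ n * Real.exp (2 * R)) :=
        le_mul_of_one_le_right (by positivity) h2
    _ = Real.exp (2 * R) * (rf (a + 1) n * (1 - R / n) ^ n * R ^ a) := by ring
    _ ≤ _ := by gcongr

lemma rf_eq_prod (a : ℝ) (n : ℕ) :
    a * rf (a + 1) n = (∏ j ∈ range (n + 1), (a + j)) / n.factorial := by
  induction n with
  | zero => simp [rf]
  | succ n ih =>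
    rw [prod_range_succ, rf, Nat.factorial_succ]
    have h : (n.factorial : ℝ) ≠ 0 := by positivity
    have := ih
    field_simp at this ⊢
    rw [show a + 1 + (n:ℝ) = a + ((n + 1 : ℕ) : ℝ) by push_cast; ring]
    push_cast
    rw [← this]; field_simp

open Filter Topology in
/-- Euler's limit formula for the Gamma function. -/
lemma tendsto_rf {a : ℝ} (ha : 0 ≤ a) :
    Tendsto (fun n : ℕ => rf (a + 1) n / (n : ℝ) ^ a) atTop (𝓝 (Real.Gamma (a + 1))⁻¹) := by
  rcases ha.eq_or_lt with rfl | ha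
  · simp [rf_one]
  · have h := (((Real.GammaSeq_tendsto_Gamma a).const_mul a).inv₀
      (by have := Real.Gamma_pos_of_pos ha; positivity))
    rw [Real.Gamma_add_one ha.ne']
    refine h.congr fun n => ?_
    have h1 := rf_eq_prod a n
    rw [Real.GammaSeq]
    have : (n.factorial : ℝ) ≠ 0 := by positivity
    rw [eq_div_iff this] at h1
    rw [← h1, mul_inv, inv_div]
    field_simp

/-! ### The Taylor coefficients of the Mittag-Leffler function -/

/-- The Gamma integral restricted to `(R, ∞)`, where `t ^ s ≥ R ^ s`. -/
lemma Gamma_lower {s R : ℝ} (hs : 0 ≤ s) (hR : 0 < R) :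
    R ^ s * Real.exp (-R) ≤ Real.Gamma (s + 1) := by
  have hc := Real.GammaIntegral_convergent (s := s + 1) (by linarith)
  rw [Real.Gamma_eq_integral (by linarith), ← integral_exp_neg_Ioi R, ← integral_const_mul]
  have hsub : Set.Ioi R ⊆ Set.Ioi 0 := Set.Ioi_subset_Ioi hR.le
  calc _ ≤ ∫ x in Set.Ioi R, Real.exp (-x) * x ^ (s + 1 - 1) := by
        apply setIntegral_mono_on _ (hc.mono_set hsub) measurableSet_Ioi
        · intro x hx
          rw [mul_comm, add_sub_cancel_right]
          gcongr
          exact hx.le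
        · exact (integrableOn_exp_neg_Ioi R).const_mul _
    _ ≤ _ := by
        apply setIntegral_mono_set hc _ (LE.le.eventuallyLE hsub)
        filter_upwards [ae_restrict_mem measurableSet_Ioi] with x hx
        have : (0:ℝ) < x := hx
        simp only [Pi.zero_apply]; positivity

/-- The Taylor coefficient `1 / Γ(βk + 1)` of `E_β` at `0`. -/
def mlc (β : ℝ) (k : ℕ) : ℝ := (Real.Gamma (β * k + 1))⁻¹

lemma mlc_nonneg {β : ℝ} (hβ : 0 < β) (k : ℕ) : 0 ≤ mlc β k :=
  inv_nonneg.2 (Real.Gamma_pos_of_pos (by positivity)).le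

lemma summable_mlc {β : ℝ} (hβ : 0 < β) {r : ℝ} (hr : 0 ≤ r) :
    Summable fun k => mlc β k * r ^ k := by
  -- With this `R`, the bound `Gamma_lower` reads `1 / Γ(βk + 1) ≤ e^R / (2 (r + 1))ᵏ`.
  set R : ℝ := (2 * (r + 1)) ^ β⁻¹ with hRdef
  have hR : 0 < R := by positivity
  have hRβ : R ^ β = 2 * (r + 1) := by
    rw [hRdef, ← Real.rpow_mul (by positivity), inv_mul_cancel₀ hβ.ne', Real.rpow_one]
  refine Summable.of_nonneg_of_le (f := fun k => Real.exp R * (1 / 2 : ℝ) ^ k)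
    (fun k => mul_nonneg (mlc_nonneg hβ k) (by positivity)) (fun k => ?_)
    (summable_geometric_two.mul_left _)
  have h := Gamma_lower (s := β * k) (by positivity) hR
  rw [Real.rpow_mul hR.le, hRβ, Real.rpow_natCast] at h
  have hG : 0 < Real.Gamma (β * k + 1) := Real.Gamma_pos_of_pos (by positivity)
  rw [mlc, inv_mul_le_iff₀ hG]
  calc r ^ k ≤ (r + 1) ^ k := by gcongr; linarith
    _ = ((2 * (r + 1)) ^ k * Real.exp (-R)) * (Real.exp R * (1 / 2) ^ k) := by
      rw [mul_pow, Real.exp_neg, one_div, inv_pow]; field_simp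
    _ ≤ _ := by gcongr

/-! ### Nonnegativity of the fractional Poisson weights -/

/-- Discrete analogue of `((-x)ᵐ / m!) E_β⁽ᵐ⁾(-x)`: the coefficient of `zⁿ` in
`∑_k C(k,m) (-c)ᵏ (1 - z)^(-βk-1)`. With `c = x / n^β` it converges to that quantity as
`n → ∞`. -/
def dml (β c : ℝ) (m n : ℕ) : ℝ := ∑' k : ℕ, (k.choose m : ℝ) * (-c) ^ k * rf (β * k + 1) n

lemma summable_dml {β c : ℝ} (hβ0 : 0 < β) (hβ1 : β ≤ 1) (hc0 : 0 ≤ c) (hc1 : c < 1) (m n : ℕ) :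
    Summable fun k : ℕ => (k.choose m : ℝ) * (-c) ^ k * rf (β * k + 1) n := by
  have h := summable_pow_mul_geometric_of_norm_lt_one (m + n) (r := c)
    (by rwa [Real.norm_of_nonneg hc0])
  have h' := (h.mul_left (2 ^ n))
  refine Summable.of_norm_bounded_eventually_nat h' ?_
  filter_upwards [Filter.eventually_ge_atTop 1] with k hk
  have hk1 : (1 : ℝ) ≤ k := by exact_mod_cast hk
  have hr := rf_nonneg (a := β * k + 1) (by positivity) n
  rw [norm_mul, norm_mul, norm_pow, norm_neg, Real.norm_of_nonneg hc0, Real.norm_of_nonneg hr,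
    Real.norm_of_nonneg (by positivity)]
  have h1 : rf (β * k + 1) n ≤ (k + 1 : ℝ) ^ n :=
    rf_le_pow (by positivity) (by nlinarith) n
  have h2 : (k + 1 : ℝ) ^ n ≤ 2 ^ n * (k : ℝ) ^ n := by
    rw [← mul_pow]; gcongr; linarith
  have h3 : (k.choose m : ℝ) ≤ (k : ℝ) ^ m := by exact_mod_cast Nat.choose_le_pow k m
  calc _ ≤ (k : ℝ) ^ m * c ^ k * (2 ^ n * (k : ℝ) ^ n) := by
        gcongr; exact h1.trans h2
    _ = _ := by rw [pow_add]; ring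

/-- Multiplication of the generating function of `dml β c m` by `(1 - z)^β`. -/
lemma dml_conv {β c : ℝ} (hβ0 : 0 < β) (hβ1 : β ≤ 1) (hc0 : 0 ≤ c) (hc1 : c < 1) (m n : ℕ) :
    ∑ p ∈ antidiagonal n, rf (-β) p.1 * dml β c m p.2
      = ∑' k : ℕ, (k.choose m : ℝ) * (-c) ^ k * rf (β * k + 1 - β) n := by
  simp only [dml, ← tsum_mul_left]
  have hS : ∀ p ∈ antidiagonal n, Summable fun k : ℕ =>
      rf (-β) p.1 * ((k.choose m : ℝ) * (-c) ^ k * rf (β * k + 1) p.2) :=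
    fun p _ => (summable_dml hβ0 hβ1 hc0 hc1 m p.2).mul_left (rf (-β) p.1)
  rw [← Summable.tsum_finsetSum hS]
  refine tsum_congr fun k => ?_
  rw [show β * k + 1 - β = -β + (β * k + 1) by ring, ← rf_add, mul_sum]
  exact sum_congr rfl fun p _ => by ring

lemma summable_dml_shift {β c : ℝ} (hβ0 : 0 < β) (hβ1 : β ≤ 1) (hc0 : 0 ≤ c) (hc1 : c < 1)
    (m n : ℕ) :
    Summable fun k : ℕ => (k.choose m : ℝ) * (-c) ^ k * rf (β * k + 1 - β) n := by
  have := summable_sum (s := antidiagonal n)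
    (f := fun p (k : ℕ) => rf (-β) p.1 * ((k.choose m : ℝ) * (-c) ^ k * rf (β * k + 1) p.2))
    fun p _ => (summable_dml hβ0 hβ1 hc0 hc1 m p.2).mul_left (rf (-β) p.1)
  refine this.congr fun k => ?_
  rw [show β * k + 1 - β = -β + (β * k + 1) by ring, ← rf_add, mul_sum]
  exact sum_congr rfl fun p _ => by ring

/-- `((1 - z)^β + c) S₀ = (1 - z)^(β-1)`, where `S₀` is the generating function of `dml β c 0`. -/
lemma dml_rec_zero {β c : ℝ} (hβ0 : 0 < β) (hβ1 : β ≤ 1) (hc0 : 0 ≤ c) (hc1 : c < 1) (n : ℕ) :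
    ∑ p ∈ antidiagonal n, rf (-β) p.1 * dml β c 0 p.2 = rf (1 - β) n - c * dml β c 0 n := by
  rw [dml_conv hβ0 hβ1 hc0 hc1, (summable_dml_shift hβ0 hβ1 hc0 hc1 0 n).tsum_eq_zero_add, dml,
    ← tsum_mul_left, sub_eq_add_neg (rf (1 - β) n), ← tsum_neg]
  congr 1
  · simp
  · refine tsum_congr fun k => ?_
    rw [show β * ((k + 1 : ℕ) : ℝ) + 1 - β = β * k + 1 by push_cast; ring]
    simp [pow_succ]; ring

/-- `((1 - z)^β + c) S_{m+1} = -c S_m`, where `S_m` is the generating function of `dml β c m`;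
it follows from Pascal's rule. -/
lemma dml_rec_succ {β c : ℝ} (hβ0 : 0 < β) (hβ1 : β ≤ 1) (hc0 : 0 ≤ c) (hc1 : c < 1) (m n : ℕ) :
    ∑ p ∈ antidiagonal n, rf (-β) p.1 * dml β c (m + 1) p.2
      = -c * dml β c m n - c * dml β c (m + 1) n := by
  rw [dml_conv hβ0 hβ1 hc0 hc1, (summable_dml_shift hβ0 hβ1 hc0 hc1 (m + 1) n).tsum_eq_zero_add,
    dml, dml, ← tsum_mul_left, ← tsum_mul_left,
    ← ((summable_dml hβ0 hβ1 hc0 hc1 m n).mul_left _).tsum_sub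
      ((summable_dml hβ0 hβ1 hc0 hc1 (m + 1) n).mul_left _)]
  simp only [Nat.choose_zero_succ, Nat.cast_zero, zero_mul, zero_add]
  refine tsum_congr fun k => ?_
  rw [show β * ((k + 1 : ℕ) : ℝ) + 1 - β = β * k + 1 by push_cast; ring, Nat.choose_succ_succ]
  push_cast
  ring

/-- If `((1 - z)^β + c) V = W` and `W` has nonnegative coefficients, so has `V`: apart from the
constant term `1 + c`, all coefficients of `(1 - z)^β + c` are nonpositive because `0 < β ≤ 1`, so
the coefficients of `V` are determined recursively by sums of nonnegative terms. -/
lemma nonneg_of_conv {β c : ℝ} (hβ0 : 0 < β) (hβ1 : β ≤ 1) (hc0 : 0 ≤ c) {v w : ℕ → ℝ}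
    (hw : ∀ n, 0 ≤ w n)
    (h : ∀ n, ∑ p ∈ antidiagonal n, rf (-β) p.1 * v p.2 = w n - c * v n) (n : ℕ) : 0 ≤ v n := by
  induction n using Nat.strong_induction_on with
  | _ n ih =>
    have hn := h n
    have key : (1 + c) * v n = w n - ∑ p ∈ antidiagonal n with p.1 ≠ 0, rf (-β) p.1 * v p.2 := by
      have : ∑ p ∈ antidiagonal n with ¬ p.1 ≠ 0, rf (-β) p.1 * v p.2 = v n := by
        rw [sum_eq_single (0, n)]
        · simp [rf]
        · rintro ⟨a, b⟩ hp hne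
          simp at hp
          grind
        · simp
      rw [← sum_filter_add_sum_filter_not _ (fun p => p.1 ≠ 0), this] at hn
      linarith
    have hs : ∑ p ∈ antidiagonal n with p.1 ≠ 0, rf (-β) p.1 * v p.2 ≤ 0 := by
      refine sum_nonpos fun p hp => ?_
      rw [mem_filter, HasAntidiagonal.mem_antidiagonal] at hp
      obtain ⟨i, hi⟩ := Nat.exists_eq_succ_of_ne_zero hp.2
      refine mul_nonpos_of_nonpos_of_nonneg ?_ (ih _ (by omega))
      rw [hi]; exact rf_neg hβ0 hβ1 i
    have : 0 ≤ (1 + c) * v n := by rw [key]; linarith [hw n]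
    exact nonneg_of_mul_nonneg_right this (by linarith)

lemma dml_sign {β c : ℝ} (hβ0 : 0 < β) (hβ1 : β ≤ 1) (hc0 : 0 ≤ c) (hc1 : c < 1) (m n : ℕ) :
    0 ≤ (-1) ^ m * dml β c m n := by
  induction m generalizing n with
  | zero =>
    simp only [pow_zero, one_mul]
    exact nonneg_of_conv hβ0 hβ1 hc0 (fun n => rf_nonneg (by linarith) n)
      (dml_rec_zero hβ0 hβ1 hc0 hc1) n
  | succ m ih =>
    refine nonneg_of_conv (v := fun n => (-1) ^ (m + 1) * dml β c (m + 1) n) hβ0 hβ1 hc0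
      (w := fun n => c * ((-1) ^ m * dml β c m n)) (fun n => mul_nonneg hc0 (ih n)) (fun n => ?_) n
    have := dml_rec_succ hβ0 hβ1 hc0 hc1 m n
    simp only [mul_left_comm (rf _ _), ← mul_sum, this]
    ring

/-- The weight `(λᵐ / m!) E_β⁽ᵐ⁾(-λ)` of the fractional Poisson measure at `m`, written as the
series `∑_k C(k,m) (-1)ᵐ (-λ)ᵏ / Γ(βk + 1)`; see `weight_eq_fpw`. -/
def fpw (lam β : ℝ) (m : ℕ) : ℝ := (-1) ^ m * ∑' k : ℕ, (k.choose m : ℝ) * (-lam) ^ k * mlc β k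

open Filter Topology in
/-- Complete monotonicity of `x ↦ E_β(-x)`: the weights are limits of the nonnegative numbers
`(-1)ᵐ dml β (λ / n^β) m n`. -/
lemma fpw_nonneg {lam β : ℝ} (hl : 0 < lam) (hβ0 : 0 < β) (hβ1 : β ≤ 1) (m : ℕ) :
    0 ≤ fpw lam β m := by
  have hlim : Tendsto (fun n : ℕ => (-1) ^ m * dml β (lam / (n : ℝ) ^ β) m n) atTop
      (𝓝 (fpw lam β m)) := by
    refine Tendsto.const_mul _ ?_
    -- The bound `rf_div_le` with this `R` beats `C(k,m) λᵏ ≤ (2λ)ᵏ` by the factor `2⁻ᵏ`.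
    set R : ℝ := (4 * lam) ^ β⁻¹ with hRdef
    have hR : 0 < R := by positivity
    have hRβ : R ^ β = 4 * lam := by
      rw [hRdef, ← Real.rpow_mul (by positivity), inv_mul_cancel₀ hβ0.ne', Real.rpow_one]
    have hterm : ∀ n k : ℕ, (k.choose m : ℝ) * (-(lam / (n : ℝ) ^ β)) ^ k * rf (β * k + 1) n
        = (k.choose m : ℝ) * (-lam) ^ k * (rf (β * k + 1) n / (n : ℝ) ^ (β * k)) := by
      intro n k
      rw [← neg_div, div_pow, Real.rpow_mul (by positivity), Real.rpow_natCast]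
      ring
    simp only [dml, hterm]
    refine tendsto_tsum_of_dominated_convergence
      (bound := fun k => Real.exp (2 * R) * (1 / 2 : ℝ) ^ k)
      (summable_geometric_two.mul_left _) (fun k => ?_) ?_
    · exact (tendsto_rf (by positivity)).const_mul _
    · filter_upwards [(tendsto_natCast_atTop_atTop (R := ℝ)).eventually_ge_atTop (2 * R)]
        with n hn k
      have hb := rf_div_le (a := β * k) (by positivity) hR hn
      rw [Real.rpow_mul hR.le, hRβ, Real.rpow_natCast] at hb
      have hr := rf_nonneg (a := β * k + 1) (by positivity) n
      rw [norm_mul, norm_mul, norm_pow, norm_neg, Real.norm_of_nonneg hl.le,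
        Real.norm_of_nonneg (by positivity : (0 : ℝ) ≤ (k.choose m : ℝ)),
        Real.norm_of_nonneg (by positivity)]
      have hch : (k.choose m : ℝ) ≤ 2 ^ k := by exact_mod_cast Nat.choose_le_two_pow k m
      calc _ ≤ 2 ^ k * lam ^ k * (Real.exp (2 * R) / (4 * lam) ^ k) := by gcongr
        _ = _ := by
          rw [show (4 : ℝ) * lam = 2 * (2 * lam) by ring, mul_pow, mul_pow, one_div, inv_pow]
          field_simp
  have hc : Tendsto (fun n : ℕ => lam / (n : ℝ) ^ β) atTop (𝓝 0) :=
    ((tendsto_rpow_atTop hβ0).comp tendsto_natCast_atTop_atTop).const_div_atTop lam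
  refine ge_of_tendsto hlim ?_
  filter_upwards [hc.eventually (gt_mem_nhds one_pos)] with n hn
  exact dml_sign hβ0 hβ1 (by positivity) hn m n

/-! ### Derivatives of everywhere convergent power series -/

lemma summable_deriv_coeff {𝕜 : Type*} [RCLike 𝕜] {a : ℕ → 𝕜}
    (ha : ∀ r : ℝ, 0 ≤ r → Summable fun k => ‖a k‖ * r ^ k) {r : ℝ} (hr : 1 ≤ r) :
    Summable fun k : ℕ => ‖a k‖ * (k * r ^ (k - 1)) := by
  refine Summable.of_nonneg_of_le (fun k => by positivity) (fun k => ?_) (ha (2 * r) (by linarith))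
  have h1 : (k : ℝ) ≤ 2 ^ k := by exact_mod_cast Nat.lt_two_pow_self.le
  have h2 : r ^ (k - 1) ≤ r ^ k := pow_le_pow_right₀ hr (Nat.sub_le _ _)
  rw [mul_pow]
  gcongr

lemma hasDerivAt_tsum_pow {𝕜 : Type*} [RCLike 𝕜] {a : ℕ → 𝕜}
    (ha : ∀ r : ℝ, 0 ≤ r → Summable fun k => ‖a k‖ * r ^ k) (y : 𝕜) :
    HasDerivAt (fun z => ∑' k, a k * z ^ k) (∑' k : ℕ, ((k : 𝕜) + 1) * a (k + 1) * y ^ k) y := by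
  set r : ℝ := ‖y‖ + 1 with hr
  have hr1 : 1 ≤ r := by rw [hr]; linarith [norm_nonneg y]
  have hu := summable_deriv_coeff ha hr1
  have hbound : ∀ (k : ℕ), ∀ z ∈ Metric.ball (0 : 𝕜) r,
      ‖a k * (k * z ^ (k - 1))‖ ≤ ‖a k‖ * (k * r ^ (k - 1)) := by
    intro k z hz
    rw [mem_ball_zero_iff] at hz
    rw [norm_mul, norm_mul, norm_pow, RCLike.norm_natCast]
    gcongr
  have hy : y ∈ Metric.ball (0 : 𝕜) r := by rw [mem_ball_zero_iff]; linarith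
  have h := hasDerivAt_tsum_of_isPreconnected (g := fun k z => a k * z ^ k)
    (g' := fun k z => a k * (k * z ^ (k - 1))) (t := Metric.ball (0 : 𝕜) r) (y₀ := 0) (y := y)
    hu Metric.isOpen_ball
    (Metric.isPreconnected_ball) (fun k z _ => (hasDerivAt_pow k z).const_mul (a k)) hbound
    (by simp; linarith)
    (summable_of_ne_finset_zero (s := {0}) fun k hk => by simp at hk; simp [hk]) hy
  convert! h using 1
  rw [(Summable.of_norm_bounded hu fun k => hbound k y hy).tsum_eq_zero_add]
  simp only [Nat.cast_zero, zero_mul, mul_zero, zero_add]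
  refine tsum_congr fun k => ?_
  simp; ring

lemma iteratedDeriv_tsum_pow {𝕜 : Type*} [RCLike 𝕜] (m : ℕ) {a : ℕ → 𝕜}
    (ha : ∀ r : ℝ, 0 ≤ r → Summable fun k => ‖a k‖ * r ^ k) :
    iteratedDeriv m (fun z => ∑' k, a k * z ^ k)
      = fun z => ∑' k : ℕ, ((k + m).descFactorial m : 𝕜) * a (k + m) * z ^ k := by
  induction m generalizing a with
  | zero => simp
  | succ m ih =>
    rw [iteratedDeriv_succ', show deriv (fun z => ∑' k, a k * z ^ k)
      = fun z => ∑' k : ℕ, ((k : 𝕜) + 1) * a (k + 1) * z ^ k from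
        funext fun y => (hasDerivAt_tsum_pow ha y).deriv, ih]
    · funext z
      refine tsum_congr fun k => ?_
      rw [← add_assoc, Nat.succ_descFactorial_succ]
      push_cast
      ring
    · intro r hr
      have h := (summable_nat_add_iff 1).2 (summable_deriv_coeff ha (r := r + 1) (by linarith))
      refine Summable.of_nonneg_of_le (fun k => by positivity) (fun k => ?_) h
      have : ‖(k : 𝕜) + 1‖ = k + 1 := by
        have := RCLike.norm_natCast (K := 𝕜) (k + 1)
        push_cast at this; exact this
      rw [norm_mul, this, Nat.add_sub_cancel, mul_comm _ ‖a (k + 1)‖, mul_assoc]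
      push_cast
      gcongr
      linarith

/-! ### The moment generating function -/

lemma summable_choose_mlc {lam β : ℝ} (hl : 0 < lam) (hβ0 : 0 < β) (m : ℕ) :
    Summable fun k : ℕ => (k.choose m : ℝ) * (-lam) ^ k * mlc β k := by
  refine Summable.of_norm_bounded (summable_mlc hβ0 (r := 2 * lam) (by positivity)) fun k => ?_
  have hch : (k.choose m : ℝ) ≤ 2 ^ k := by exact_mod_cast Nat.choose_le_two_pow k m
  have h0 := mlc_nonneg hβ0 k
  rw [norm_mul, norm_mul, norm_pow, norm_neg, Real.norm_of_nonneg hl.le, Real.norm_of_nonneg h0,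
    Real.norm_of_nonneg (by positivity), mul_comm, mul_pow]
  gcongr

lemma weight_eq_fpw {lam β : ℝ} (hl : 0 < lam) (hβ0 : 0 < β) (m : ℕ) :
    lam ^ m / m.factorial * iteratedDeriv m (mittagLefflerR β) (-lam) = fpw lam β m := by
  have hE : mittagLefflerR β = fun z => ∑' k, mlc β k * z ^ k := by
    funext z; exact tsum_congr fun k => by rw [mlc, div_eq_inv_mul]
  rw [hE, iteratedDeriv_tsum_pow m fun r hr => by
    simpa [abs_of_nonneg (mlc_nonneg hβ0 _)] using summable_mlc hβ0 hr]
  rw [fpw, ← (summable_choose_mlc hl hβ0 m).sum_add_tsum_nat_add m,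
    sum_eq_zero fun k hk => by rw [Nat.choose_eq_zero_of_lt (mem_range.1 hk)]; simp, zero_add,
    ← tsum_mul_left, ← tsum_mul_left]
  refine tsum_congr fun k => ?_
  rw [Nat.descFactorial_eq_factorial_mul_choose]
  have : (m.factorial : ℝ) ≠ 0 := by positivity
  have hs : ((-1 : ℝ) ^ m) * (-1) ^ m = 1 := by rw [← mul_pow]; simp
  push_cast
  rw [pow_add, neg_pow lam m]
  field_simp
  linear_combination (-(((k + m).choose m : ℝ) * mlc β (k + m) * (-lam) ^ k)) * hs

lemma hasSum_choose (k : ℕ) (w : ℂ) :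
    HasSum (fun j => (k.choose j : ℂ) * w ^ j) ((1 + w) ^ k) := by
  have e : (1 + w) ^ k = ∑ j ∈ range (k + 1), (k.choose j : ℂ) * w ^ j := by
    rw [add_comm (1 : ℂ) w, add_pow]
    exact sum_congr rfl fun j _ => by ring
  rw [e]
  refine hasSum_sum_of_ne_finset_zero fun j hj => ?_
  rw [Nat.choose_eq_zero_of_lt (by simpa using hj)]
  simp

/-- The probability generating function of the fractional Poisson measure is `E_β(λ (w - 1))`:
expand `(1 - w)ᵏ` in the Taylor series of `E_β` and exchange the sums. -/
lemma hasSum_fpw {lam β : ℝ} (hl : 0 < lam) (hβ0 : 0 < β) (w : ℂ) :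
    HasSum (fun j => (fpw lam β j : ℂ) * w ^ j) (mittagLeffler β (lam * (w - 1))) := by
  set F : ℕ × ℕ → ℂ := fun p =>
    (mlc β p.1 : ℂ) * (-lam) ^ p.1 * ((p.1.choose p.2 : ℂ) * (-w) ^ p.2) with hF
  have hrow : ∀ k, HasSum (fun j => F (k, j)) ((mlc β k : ℂ) * (-lam) ^ k * (1 + -w) ^ k) :=
    fun k => (hasSum_choose k (-w)).mul_left ((mlc β k : ℂ) * (-lam) ^ k)
  have hnorm : ∀ k, HasSum (fun j => ‖F (k, j)‖) (mlc β k * (lam * (1 + ‖w‖)) ^ k) := by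
    intro k
    have h := ((hasSum_choose k (‖w‖ : ℂ)).mul_left ((mlc β k : ℂ) * lam ^ k))
    rw [← Complex.hasSum_ofReal]
    convert! h using 1
    · funext j
      simp [hF, abs_of_nonneg (mlc_nonneg hβ0 _), abs_of_pos hl]
    · push_cast; rw [mul_pow]; ring
  have hS : Summable F := by
    refine Summable.of_norm ((summable_prod_of_nonneg fun p => norm_nonneg _).2
      ⟨fun k => (hnorm k).summable, ?_⟩)
    exact (summable_mlc hβ0 (r := lam * (1 + ‖w‖)) (by positivity)).congr
      fun k => (hnorm k).tsum_eq.symm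
  have h1 := hS.hasSum.prod_fiberwise hrow
  have h2 : HasSum (fun j => (fpw lam β j : ℂ) * w ^ j) (∑' p, F p) := by
    have hS' : HasSum (F ∘ Prod.swap) (∑' p, F p) :=
      (Equiv.prodComm ℕ ℕ).hasSum_iff.2 hS.hasSum
    refine hS'.prod_fiberwise fun j => ?_
    have := (Complex.hasSum_ofReal.2 (summable_choose_mlc hl hβ0 j).hasSum).mul_right ((-w) ^ j)
    convert! this using 1
    · funext k; simp [hF]; ring
    · rw [fpw, neg_pow w]; push_cast; ring
  convert! h2 using 1
  rw [← h1.tsum_eq, mittagLeffler]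
  refine tsum_congr fun k => ?_
  rw [Complex.Gamma_ofReal, mlc, div_eq_inv_mul, mul_assoc, ← mul_pow]
  push_cast
  ring

lemma summable_fpw {lam β : ℝ} (hl : 0 < lam) (hβ0 : 0 < β) (r : ℝ) :
    Summable fun j => fpw lam β j * r ^ j := by
  rw [← Complex.summable_ofReal]
  simpa using (hasSum_fpw hl hβ0 (r : ℂ)).summable

/-- Nonnegativity of the weights is essential here: the measure is defined through
`ENNReal.ofReal`, which truncates negative numbers to `0`. -/
lemma hasSum_fpMoment {lam β : ℝ} (hl : 0 < lam) (hβ0 : 0 < β) (hβ1 : β ≤ 1) (n : ℕ) :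
    HasSum (fun j : ℕ => fpw lam β j * (j : ℝ) ^ n) (fpMoment lam β n) := by
  have hp := fpw_nonneg hl hβ0 hβ1
  have hS : Summable fun j : ℕ => fpw lam β j * (j : ℝ) ^ n := by
    refine Summable.of_nonneg_of_le (fun j => mul_nonneg (hp j) (by positivity)) (fun j => ?_)
      ((summable_fpw hl hβ0 (Real.exp 1)).mul_left (n.factorial : ℝ))
    have h := Real.pow_div_factorial_le_exp (j : ℝ) (by positivity) n
    rw [div_le_iff₀ (by positivity)] at h
    rw [← Real.exp_nat_mul, mul_one, mul_left_comm, mul_comm (n.factorial : ℝ)]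
    exact mul_le_mul_of_nonneg_left h (hp j)
  rw [hS.hasSum_iff, fpMoment, fracPoisson]
  simp only [weight_eq_fpw hl hβ0]
  rw [integral_sum_dirac_eq_tsum (fun _ => ENNReal.ofReal_ne_top)]
  · simp [ENNReal.toReal_ofReal (hp _)]
  · simpa [ENNReal.toReal_ofReal (hp _)] using hS

/-- `E_β(λ (e^z - 1))` is the exponential generating function of the moments. -/
lemma hasSum_mgf {lam β : ℝ} (hl : 0 < lam) (hβ0 : 0 < β) (hβ1 : β ≤ 1) (z : ℂ) :
    HasSum (fun n => (fpMoment lam β n : ℂ) / n.factorial * z ^ n)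
      (mittagLeffler β (lam * (Complex.exp z - 1))) := by
  have hp := fpw_nonneg hl hβ0 hβ1
  set F : ℕ × ℕ → ℂ := fun p => (fpw lam β p.1 : ℂ) * ((p.1 * z) ^ p.2 / p.2.factorial) with hF
  have hrow : ∀ j, HasSum (fun n => F (j, n)) ((fpw lam β j : ℂ) * Complex.exp z ^ j) := by
    intro j
    rw [← Complex.exp_nat_mul, Complex.exp_eq_exp_ℂ]
    exact (NormedSpace.expSeries_div_hasSum_exp (j * z)).mul_left _
  have hnorm : ∀ j, HasSum (fun n => ‖F (j, n)‖) (fpw lam β j * Real.exp ‖z‖ ^ j) := by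
    intro j
    rw [← Real.exp_nat_mul, Real.exp_eq_exp_ℝ]
    have h := (NormedSpace.expSeries_div_hasSum_exp (j * ‖z‖)).mul_left (fpw lam β j)
    convert! h using 1
    funext n
    simp [hF, abs_of_nonneg (hp j)]
  have hS : Summable F := by
    refine Summable.of_norm ((summable_prod_of_nonneg fun p => norm_nonneg _).2
      ⟨fun k => (hnorm k).summable, ?_⟩)
    exact (summable_fpw hl hβ0 (Real.exp ‖z‖)).congr fun k => (hnorm k).tsum_eq.symm
  have h1 := (hS.hasSum.prod_fiberwise hrow).unique (hasSum_fpw hl hβ0 (Complex.exp z))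
  have hS' : HasSum (F ∘ Prod.swap) (∑' p, F p) :=
    (Equiv.prodComm ℕ ℕ).hasSum_iff.2 hS.hasSum
  rw [← h1]
  refine hS'.prod_fiberwise fun n => ?_
  have := (Complex.hasSum_ofReal.2 (hasSum_fpMoment hl hβ0 hβ1 n)).mul_right (z ^ n / n.factorial)
  convert! this using 1
  · funext k; simp [hF]; ring
  · ring

lemma iteratedDeriv_mgf {lam β : ℝ} (hl : 0 < lam) (hβ0 : 0 < β) (hβ1 : β ≤ 1) :
    ContDiff ℂ ⊤ (fun z => mittagLeffler β (lam * (Complex.exp z - 1))) ∧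
    ∀ n, iteratedDeriv n (fun z => mittagLeffler β (lam * (Complex.exp z - 1))) 0
      = fpMoment lam β n := by
  have ha : ∀ r : ℝ, 0 ≤ r → Summable fun k : ℕ =>
      ‖(fpMoment lam β k : ℂ) / k.factorial‖ * r ^ k := by
    intro r hr
    have := (hasSum_mgf hl hβ0 hβ1 (r : ℂ)).summable.norm
    simpa [abs_of_nonneg hr] using this
  have hf : (fun z => mittagLeffler β (lam * (Complex.exp z - 1)))
      = fun z => ∑' n, (fpMoment lam β n : ℂ) / n.factorial * z ^ n :=
    funext fun z => (hasSum_mgf hl hβ0 hβ1 z).tsum_eq.symm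
  rw [hf]
  refine ⟨Differentiable.contDiff fun z => (hasDerivAt_tsum_pow ha z).differentiableAt,
    fun n => ?_⟩
  rw [iteratedDeriv_tsum_pow n ha]
  beta_reduce
  rw [tsum_eq_single 0 fun k hk => by simp [hk]]
  have : (n.factorial : ℂ) ≠ 0 := by exact_mod_cast n.factorial_ne_zero
  simp [Nat.descFactorial_self]
  field_simp

/-! ### Bell polynomials and reciprocals of power series -/

open PowerSeries in
lemma coeff_eq_zero_of_X_pow_dvd {f : PowerSeries ℂ} {N n : ℕ} (h : (X : PowerSeries ℂ) ^ N ∣ f)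
    (hn : n < N) : coeff n f = 0 := X_pow_dvd_iff.1 h n hn

open PowerSeries in
/-- The generating function identity `k! B_{n,k}(x) = n! [zⁿ] (∑_{i ≥ 1} xᵢ zⁱ / i!)ᵏ`.
Only the terms with `i ≤ n - k + 1` contribute to this coefficient, and the multinomial theorem
expands the `k`-th power of the truncated sum. -/
lemma coeff_pow_eq_bellPoly (x : ℕ → ℂ) {n k : ℕ} (hk : k ≤ n) :
    (k.factorial : ℂ) * bellPoly n k x = (n.factorial : ℂ) *
      coeff n ((PowerSeries.mk fun i => if i = 0 then 0 else x i / (i.factorial : ℂ)) ^ k) := by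
  set g : PowerSeries ℂ := PowerSeries.mk fun i => if i = 0 then 0 else x i / (i.factorial : ℂ)
    with hg
  set t : PowerSeries ℂ := ∑ i : Fin (n - k + 1),
    C (x (i.1 + 1) / ((i.1 + 1).factorial : ℂ)) * X ^ (i.1 + 1) with ht
  have hgX : (X : PowerSeries ℂ) ∣ g := X_dvd_iff.2 (by simp [hg])
  have htX : (X : PowerSeries ℂ) ∣ t :=
    dvd_sum fun i _ => Dvd.dvd.mul_left (dvd_pow_self _ (by omega)) _
  have hgt : (X : PowerSeries ℂ) ^ (n - k + 2) ∣ g - t := by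
    rw [X_pow_dvd_iff]
    intro m hm
    rw [map_sub, sub_eq_zero, ht, map_sum, hg, coeff_mk]
    simp only [coeff_C_mul, coeff_X_pow]
    rcases m with _ | m
    · simp
    · rw [sum_eq_single ⟨m, by omega⟩]
      · simp
      · rintro ⟨i, hi⟩ _ hne
        have : m ≠ i := fun h => hne (by simp [h])
        simp [this]
      · simp
  -- `gᵏ - tᵏ` is `g - t` times a form of degree `k - 1` in `g` and `t`, hence divisible by
  -- `X ^ (n - k + 2) * X ^ (k - 1) = X ^ (n + 1)`.
  have hpow : coeff n (g ^ k) = coeff n (t ^ k) := by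
    rcases k with _ | k
    · simp
    rw [← sub_eq_zero, ← map_sub]
    refine coeff_eq_zero_of_X_pow_dvd (N := n + 1) ?_ (Nat.lt_succ_self n)
    rw [← (Commute.all g t).geom_sum₂_mul (k + 1),
      show n + 1 = k + (n - (k + 1) + 2) by omega, pow_add]
    refine mul_dvd_mul (dvd_sum fun i hi => ?_) hgt
    have hi' : i ≤ k := Nat.lt_succ_iff.1 (mem_range.1 hi)
    have : k + 1 - 1 - i = k - i := by omega
    rw [this]
    calc (X : PowerSeries ℂ) ^ k = X ^ i * X ^ (k - i) := by rw [← pow_add]; congr 1; omega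
      _ ∣ _ := mul_dvd_mul (pow_dvd_pow_of_dvd hgX i) (pow_dvd_pow_of_dvd htX (k - i))
  have hterm : ∀ j : Fin (n - k + 1) → ℕ,
      coeff n ((Nat.multinomial univ j : PowerSeries ℂ) *
        ∏ i, (C (x (i.1 + 1) / ((i.1 + 1).factorial : ℂ)) * X ^ (i.1 + 1)) ^ j i)
      = if ∑ i, (i.1 + 1) * j i = n then (Nat.multinomial univ j : ℂ) *
        ∏ i, (x (i.1 + 1) / ((i.1 + 1).factorial : ℂ)) ^ j i else 0 := by
    intro j
    have e : (Nat.multinomial univ j : PowerSeries ℂ) *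
        ∏ i, (C (x (i.1 + 1) / ((i.1 + 1).factorial : ℂ)) * X ^ (i.1 + 1)) ^ j i
        = C ((Nat.multinomial univ j : ℂ) *
        ∏ i, (x (i.1 + 1) / ((i.1 + 1).factorial : ℂ)) ^ j i) * X ^ (∑ i, (i.1 + 1) * j i) := by
      simp only [mul_pow, prod_mul_distrib, ← pow_mul, prod_pow_eq_pow_sum, map_mul, map_prod,
        map_pow, map_natCast, mul_assoc]
    rw [e, coeff_C_mul, coeff_X_pow]
    simp [eq_comm]
  rw [hpow, ht, sum_pow_eq_sum_piAntidiag, map_sum, sum_congr rfl fun j _ => hterm j,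
    ← sum_filter, bellPoly, mul_sum, mul_sum]
  have hset : (Fintype.piFinset fun _ : Fin (n - k + 1) => Finset.range (n + 1)).filter
      (fun j => (∑ i, j i) = k ∧ (∑ i, (i.1 + 1) * j i) = n)
      = (univ.piAntidiag k).filter fun j => (∑ i, (i.1 + 1) * j i) = n := by
    ext j
    simp only [mem_filter, Fintype.mem_piFinset, mem_range, mem_piAntidiag, mem_univ,
      implies_true, and_true]
    refine ⟨fun h => h.2, fun h => ⟨fun i => ?_, h⟩⟩
    have h1 : j i ≤ ∑ i, j i := single_le_sum (fun _ _ => Nat.zero_le _) (mem_univ i)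
    have h2 : ∑ i, j i = k := h.1
    omega
  rw [hset]
  refine sum_congr rfl fun j hj => ?_
  have hj' : ∑ i, j i = k := by
    have := (mem_filter.1 hj).1
    rw [mem_piAntidiag] at this
    exact this.1
  have hm : (∏ i, ((j i).factorial : ℂ)) * (Nat.multinomial univ j : ℂ) = k.factorial := by
    have h := Nat.multinomial_spec univ j
    rw [hj'] at h
    exact_mod_cast h
  have hne : (∏ i, ((j i).factorial : ℂ)) ≠ 0 :=
    prod_ne_zero_iff.2 fun i _ => by exact_mod_cast (j i).factorial_ne_zero
  rw [← hm]
  field_simp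

open PowerSeries in
/-- Coefficients of the reciprocal of an exponential generating function with constant term `1`,
from the geometric series `1 / (1 + g) = ∑ (-g)ᵏ`, where `g` has no constant term. -/
lemma coeff_inv_eq_bell {x : ℕ → ℂ} (hx : x 0 = 1) {H : PowerSeries ℂ}
    (hH : (PowerSeries.mk fun i => x i / (i.factorial : ℂ)) * H = 1) (n : ℕ) :
    (n.factorial : ℂ) * coeff n H =
      ∑ k ∈ Finset.range (n + 1), (-1 : ℂ) ^ k * (k.factorial : ℂ) * bellPoly n k x := by
  set g : PowerSeries ℂ := PowerSeries.mk fun i => if i = 0 then 0 else x i / (i.factorial : ℂ)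
    with hg
  have h1 : (PowerSeries.mk fun i => x i / (i.factorial : ℂ)) = 1 + g := by
    ext i
    rcases i with _ | i
    · simp [hg, hx]
    · simp [hg, coeff_one]
  have hgX : (X : PowerSeries ℂ) ∣ g := X_dvd_iff.2 (by simp [hg])
  rw [h1] at hH
  have hgeom := mul_neg_geom_sum (-g) (n + 1)
  have h2 : H = ∑ k ∈ range (n + 1), (-g) ^ k + (-g) ^ (n + 1) * H := by
    linear_combination (-H) * hgeom + (∑ k ∈ range (n + 1), (-g) ^ k) * hH
  have h3 : coeff n ((-g) ^ (n + 1) * H) = 0 :=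
    coeff_eq_zero_of_X_pow_dvd
      (Dvd.dvd.mul_right (pow_dvd_pow_of_dvd ((dvd_neg).2 hgX) _) _) (Nat.lt_succ_self n)
  rw [h2, map_add, h3, add_zero, map_sum, mul_sum]
  refine sum_congr rfl fun k hk => ?_
  rw [mul_assoc, coeff_pow_eq_bellPoly x (Nat.lt_succ_iff.1 (mem_range.1 hk)), neg_pow,
    show ((-1 : PowerSeries ℂ)) ^ k = C ((-1 : ℂ) ^ k) by simp, coeff_C_mul]
  ring

/-- The Taylor series of `f` and `1 / f` at `0` are inverse formal power series (Leibniz rule). -/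
lemma mk_iteratedDeriv_mul_inv {f : ℂ → ℂ} (hf : ContDiff ℂ ⊤ f) (h0 : f 0 ≠ 0) :
    (PowerSeries.mk fun i => iteratedDeriv i f 0 / (i.factorial : ℂ)) *
      (PowerSeries.mk fun i => iteratedDeriv i (fun z => (f z)⁻¹) 0 / (i.factorial : ℂ)) = 1 := by
  ext n
  have hf' : ContDiffAt ℂ n f 0 := hf.contDiffAt.of_le le_top
  have h := iteratedDeriv_fun_mul (n := n) (g := fun z => (f z)⁻¹) hf' (hf'.inv h0)
  have hev : (fun z => f z * (f z)⁻¹) =ᶠ[nhds 0] fun _ => (1 : ℂ) := by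
    filter_upwards [hf.continuous.continuousAt.eventually_ne h0] with z hz
    exact mul_inv_cancel₀ hz
  rw [hev.iteratedDeriv_eq n, iteratedDeriv_const] at h
  rw [PowerSeries.coeff_mul, PowerSeries.coeff_one,
    Finset.Nat.sum_antidiagonal_eq_sum_range_succ_mk]
  have hn : (n.factorial : ℂ) ≠ 0 := by exact_mod_cast n.factorial_ne_zero
  apply mul_left_cancel₀ hn
  rw [mul_sum]
  calc _ = ∑ i ∈ range (n + 1), (n.choose i : ℂ) * iteratedDeriv i f 0
        * iteratedDeriv (n - i) (fun z => (f z)⁻¹) 0 := by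
        refine sum_congr rfl fun i hi => ?_
        have hi' : i ≤ n := Nat.lt_succ_iff.1 (mem_range.1 hi)
        have hc : (n.choose i : ℂ) * i.factorial * (n - i).factorial = n.factorial := by
          exact_mod_cast Nat.choose_mul_factorial_mul_factorial hi'
        have h1 : (i.factorial : ℂ) ≠ 0 := by exact_mod_cast i.factorial_ne_zero
        have h2 : ((n - i).factorial : ℂ) ≠ 0 := by exact_mod_cast (n - i).factorial_ne_zero
        simp only [PowerSeries.coeff_mk]
        rw [← hc]
        field_simp
    _ = _ := by
        rw [← h]
        split_ifs with hn0 <;> simp [hn0]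

theorem stmt16 (lam β : ℝ) (hlam : 0 < lam) (hβ0 : 0 < β) (hβ1 : β ≤ 1) (n : ℕ) :
    appell lam β n 0 =
      ∑ k ∈ Finset.range (n + 1), (-1 : ℂ) ^ k * (k.factorial : ℂ) *
        bellPoly n k (fun j => ((fpMoment lam β j : ℝ) : ℂ)) := by
  obtain ⟨hsm, hder⟩ := iteratedDeriv_mgf hlam hβ0 hβ1
  set f : ℂ → ℂ := fun z => mittagLeffler β (lam * (Complex.exp z - 1)) with hf
  have hf0 : f 0 = 1 := by
    simp only [hf, Complex.exp_zero, sub_self, mul_zero, mittagLeffler]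
    rw [tsum_eq_single 0 fun k hk => by simp [hk]]
    simp
  have hx0 : ((fpMoment lam β 0 : ℝ) : ℂ) = 1 := by rw [← hder 0, iteratedDeriv_zero, hf0]
  have hmul := mk_iteratedDeriv_mul_inv hsm (by rw [hf0]; exact one_ne_zero)
  simp only [hder] at hmul
  rw [← coeff_inv_eq_bell (x := fun j => ((fpMoment lam β j : ℝ) : ℂ)) hx0 hmul n,
    PowerSeries.coeff_mk, mul_div_cancel₀ _ (by exact_mod_cast n.factorial_ne_zero), appell]
  simp [hf]
end
end
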